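/- Let E be a Banach space, T > 0, and let K be a Volterra kernel on [0,T] satisfying Condition (A) with exponent α ∈ [0, 1/4). Let ψ: [0,T]² → E be strongly λ-Hölder bi-continuous with λ > α. Then for every ε > 0 there exists δ > 0 such that for every grid partition π of [0,T]² with mesh ‖π‖ < δ, the step approximation ψ^π satisfies ∫_0^T ‖(K*⊗K*)(ψ^π − ψ)(r,r)‖_E dr < ε; i.e., the diagonal restriction of (K*⊗K*)(ψ^π − ψ) converges to 0 in L¹([0,T]; E) as the mesh of the partition tends to 0. -/

import Mathlib

open MeasureTheory Set

noncomputable section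

namespace YS

variable {E : Type*} [NormedAddCommGroup E] [NormedSpace ℝ E]

/-- A Volterra kernel: a measurable `K : ℝ² → ℝ` with `K t s = 0` whenever `s ≥ t`. -/
def IsVolterraKernel (K : ℝ → ℝ → ℝ) : Prop :=
  Measurable (Function.uncurry K) ∧ ∀ t s : ℝ, t ≤ s → K t s = 0

/-- Condition (A) with exponent `α` and constant `C`; here `K' t s` denotes the partial
derivative `∂K(t,s)/∂t`, whose existence is part of the condition. -/
def CondA (T α C : ℝ) (K K' : ℝ → ℝ → ℝ) : Prop :=
  (∀ s t : ℝ, 0 < s → s < t → t ≤ T → |K t s| ≤ C * s ^ (-α) * (t - s) ^ (-α)) ∧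
  ∀ s t : ℝ, 0 < s → s < t → t ≤ T →
    HasDerivAt (fun r => K r s) (K' t s) t ∧ |K' t s| ≤ C * (t - s) ^ (-(α + 1))

/-- The operator `𝒦*`:  `(𝒦*φ)(s) = φ(s)K(T,s) + ∫_s^T [φ(r) − φ(s)] ∂K(r,s)/∂r dr`. -/
def Kstar (T : ℝ) (K K' : ℝ → ℝ → ℝ) (φ : ℝ → E) (s : ℝ) : E :=
  K T s • φ s + ∫ r in s..T, K' r s • (φ r - φ s)

/-- The operator `A^K`. -/
def AK (T : ℝ) (K' : ℝ → ℝ → ℝ) (φ : ℝ → E) (s : ℝ) : E :=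
  ∫ r in s..T, K' r s • (φ r - φ s)

/-- Rectangular increment `f(u₁,u₂;v₁,v₂)`. -/
def rectInc (ψ : ℝ → ℝ → E) (u₁ u₂ v₁ v₂ : ℝ) : E :=
  ψ u₁ v₁ + ψ u₂ v₂ - ψ u₁ v₂ - ψ u₂ v₁

/-- The operator `B^K`. -/
def BK (T : ℝ) (K' : ℝ → ℝ → ℝ) (ψ : ℝ → ℝ → E) (u v : ℝ) : E :=
  ∫ r₂ in v..T, ∫ r₁ in u..T, (K' r₁ u * K' r₂ v) • rectInc ψ u r₁ v r₂

/-- The operator `𝒦* ⊗ 𝒦*`. -/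
def KstarT (T : ℝ) (K K' : ℝ → ℝ → ℝ) (ψ : ℝ → ℝ → E) (u v : ℝ) : E :=
  (K T u * K T v) • ψ u v + K T v • AK T K' (fun x => ψ x v) u +
    K T u • AK T K' (fun y => ψ u y) v + BK T K' ψ u v

/-- A partition `0 = s₀ < s₁ < ⋯ < s_n = T` of `[0,T]`. -/
structure Partition (T : ℝ) where
  n : ℕ
  pts : ℕ → ℝ
  n_pos : 0 < n
  first : pts 0 = 0
  last : pts n = T
  lt : ∀ i < n, pts i < pts (i + 1)

/-- Mesh of a partition: the largest increment. -/
def Partition.mesh {T : ℝ} (P : Partition T) : ℝ :=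
  (Finset.range P.n).sup' (Finset.nonempty_range_iff.mpr P.n_pos.ne')
    fun i => P.pts (i + 1) - P.pts i

/-- One-dimensional step approximation `φ^π`. -/
def step1 {T : ℝ} (P : Partition T) (φ : ℝ → E) (s : ℝ) : E :=
  ∑ i ∈ Finset.range P.n,
    (Set.Ico (P.pts i) (P.pts (i + 1))).indicator (fun _ => φ (P.pts i)) s

/-- Two-dimensional step approximation `ψ^π` for the grid partition `P × Q`. -/
def step2 {T : ℝ} (P Q : Partition T) (ψ : ℝ → ℝ → E) (u v : ℝ) : E :=
  ∑ i ∈ Finset.range P.n, ∑ j ∈ Finset.range Q.n,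
    ((Set.Ico (P.pts i) (P.pts (i + 1))) ×ˢ (Set.Ico (Q.pts j) (Q.pts (j + 1)))).indicator
      (fun _ => ψ (P.pts i) (Q.pts j)) (u, v)

/-- `λ`-Hölder continuity on `[0,T]` with constant `C`. -/
def IsHolderWith (T lam C : ℝ) (φ : ℝ → E) : Prop :=
  ∀ t₁ ∈ Icc (0:ℝ) T, ∀ t₂ ∈ Icc (0:ℝ) T, ‖φ t₁ - φ t₂‖ ≤ C * |t₁ - t₂| ^ lam

/-- `λ`-Hölder continuity on `[0,T]`. -/
def IsHolder (T lam : ℝ) (φ : ℝ → E) : Prop := ∃ C : ℝ, IsHolderWith T lam C φ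

/-- `λ`-Hölder bi-continuity with constant `C`. -/
def IsHolderBiWith (T lam C : ℝ) (ψ : ℝ → ℝ → E) : Prop :=
  (∀ u₁ ∈ Icc (0:ℝ) T, ∀ u₂ ∈ Icc (0:ℝ) T, ∀ v ∈ Icc (0:ℝ) T,
      ‖ψ u₂ v - ψ u₁ v‖ ≤ C * |u₂ - u₁| ^ lam) ∧
  ∀ u ∈ Icc (0:ℝ) T, ∀ v₁ ∈ Icc (0:ℝ) T, ∀ v₂ ∈ Icc (0:ℝ) T,
      ‖ψ u v₂ - ψ u v₁‖ ≤ C * |v₂ - v₁| ^ lam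

/-- `λ`-Hölder bi-continuity. -/
def IsHolderBi (T lam : ℝ) (ψ : ℝ → ℝ → E) : Prop := ∃ C : ℝ, IsHolderBiWith T lam C ψ

/-- Strong `λ`-Hölder bi-continuity with constant `C`. -/
def IsStrongHolderBiWith (T lam C : ℝ) (ψ : ℝ → ℝ → E) : Prop :=
  IsHolderBiWith T lam C ψ ∧
  ∀ u₁ ∈ Icc (0:ℝ) T, ∀ u₂ ∈ Icc (0:ℝ) T, ∀ v₁ ∈ Icc (0:ℝ) T, ∀ v₂ ∈ Icc (0:ℝ) T,
    ‖rectInc ψ u₁ u₂ v₁ v₂‖ ≤ C * |u₂ - u₁| ^ lam * |v₂ - v₁| ^ lam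

/-- Strong `λ`-Hölder bi-continuity. -/
def IsStrongHolderBi (T lam : ℝ) (ψ : ℝ → ℝ → E) : Prop :=
  ∃ C : ℝ, IsStrongHolderBiWith T lam C ψ

/-- The covariance function `R(s,t) = ∫_0^{s∧t} K(t,r)K(s,r) dr` of the Volterra process. -/
def covR (K : ℝ → ℝ → ℝ) (s t : ℝ) : ℝ := ∫ r in (0:ℝ)..(min s t), K t r * K s r

/-- The 2D Riemann–Stieltjes sum of `f` against `g` over the grid partition `P × Q`. -/
def RSsum {T : ℝ} (P Q : Partition T) (f g : ℝ → ℝ → ℝ) : ℝ :=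
  ∑ i ∈ Finset.range P.n, ∑ j ∈ Finset.range Q.n,
    f (P.pts i) (Q.pts j) *
      rectInc g (P.pts i) (P.pts (i + 1)) (Q.pts j) (Q.pts (j + 1))

lemma ae_ne_real (c : ℝ) : ∀ᵐ t : ℝ, t ≠ c := by
  simp [ae_iff]

lemma kint (u T s : ℝ) (hs : 0 < s) (hu : u ≤ T) :
    IntervalIntegrable (fun r : ℝ => (r - u) ^ (s - 1)) volume u T ∧
    ∫ r in u..T, (r - u) ^ (s - 1) = (T - u) ^ s / s := by
  constructor
  · have h := (intervalIntegral.intervalIntegrable_rpow' (a := u - u) (b := T - u)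
      (r := s - 1) (by linarith)).comp_sub_right u
    simpa using h
  · rw [intervalIntegral.integral_comp_sub_right (fun x => x ^ (s - 1)) u]
    rw [integral_rpow (Or.inl (by linarith))]
    simp [Real.zero_rpow hs.ne']

lemma norm_int_bound (T u s c : ℝ) (hs : 0 < s) (hu : 0 ≤ u) (huT : u < T)
    (hc : 0 ≤ c) (F : ℝ → E)
    (hF : ∀ r, u < r → r < T → ‖F r‖ ≤ c * (r - u) ^ (s - 1)) :
    ‖∫ r in u..T, F r‖ ≤ c * (T ^ s / s) := by
  have h := kint u T s hs huT.le
  calc ‖∫ r in u..T, F r‖ ≤ ∫ r in u..T, c * (r - u) ^ (s - 1) := by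
        apply intervalIntegral.norm_integral_le_of_norm_le huT.le
        · filter_upwards [ae_ne_real T] with r hr hr2
          exact hF r hr2.1 (lt_of_le_of_ne hr2.2 hr)
        · exact h.1.const_mul c
    _ = c * ((T - u) ^ s / s) := by
        rw [intervalIntegral.integral_const_mul, h.2]
    _ ≤ _ := by
        have : (T - u) ^ s ≤ T ^ s := Real.rpow_le_rpow (by linarith) (by linarith) hs.le
        gcongr

lemma kstarT_bound (T α β C : ℝ) (K K' : ℝ → ℝ → ℝ) (hC : 0 ≤ C) (hA : CondA T α C K K')
    (hβ : α < β) (f : ℝ → ℝ → E) (u η a b : ℝ) (hu : 0 < u) (huT : u < T)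
    (hη : 0 ≤ η) (ha : 0 ≤ a) (hb : 0 ≤ b)
    (h0 : ‖f u u‖ ≤ η)
    (h1 : ∀ r, u < r → r < T → ‖f r u - f u u‖ ≤ η * a * (r - u) ^ β)
    (h2 : ∀ r, u < r → r < T → ‖f u r - f u u‖ ≤ η * b * (r - u) ^ β)
    (h3 : ∀ r, u < r → r < T → ∀ r', u < r' → r' < T →
      ‖rectInc f u r u r'‖ ≤ η * a * b * (r - u) ^ β * (r' - u) ^ β) :
    ‖KstarT T K K' f u u‖ ≤ η * (C * (u ^ (-α) * (T - u) ^ (-α)) + C * (T ^ (β - α) / (β - α)) * a)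
      * (C * (u ^ (-α) * (T - u) ^ (-α)) + C * (T ^ (β - α) / (β - α)) * b) := by
  have hs : 0 < β - α := by linarith
  set J := T ^ (β - α) / (β - α) with hJ
  have hT : 0 < T := hu.trans huT
  have hJ0 : 0 ≤ J := by positivity
  set k := C * (u ^ (-α) * (T - u) ^ (-α)) with hk
  have hTu : 0 < T - u := by linarith
  have hk0 : 0 ≤ k := by positivity
  have hKk : ‖K T u‖ ≤ k := by
    have := hA.1 u T hu huT le_rfl
    rw [Real.norm_eq_abs, hk, ← mul_assoc]; exact this
  have hK' : ∀ r, u < r → r < T → ‖K' r u‖ * (r - u) ^ β ≤ C * (r - u) ^ (β - α - 1) := by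
    intro r hr hrT
    have := (hA.2 u r hu hr hrT.le).2
    have hru : 0 < r - u := by linarith
    calc ‖K' r u‖ * (r - u) ^ β ≤ (C * (r - u) ^ (-(α + 1))) * (r - u) ^ β := by
          gcongr; exact this
      _ = C * (r - u) ^ (β - α - 1) := by
          rw [mul_assoc, ← Real.rpow_add hru]; congr 2; ring
  have hA1 : ‖AK T K' (fun x => f x u) u‖ ≤ (C * η * a) * J := by
    apply norm_int_bound T u _ _ hs hu.le huT (by positivity)
    intro r hr hrT
    rw [norm_smul]
    calc ‖K' r u‖ * ‖f r u - f u u‖ ≤ ‖K' r u‖ * (η * a * (r - u) ^ β) := by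
          gcongr; exact h1 r hr hrT
      _ = (η * a) * (‖K' r u‖ * (r - u) ^ β) := by ring
      _ ≤ (η * a) * (C * (r - u) ^ (β - α - 1)) :=
          mul_le_mul_of_nonneg_left (hK' r hr hrT) (by positivity)
      _ = _ := by ring
  have hA2 : ‖AK T K' (fun x => f u x) u‖ ≤ (C * η * b) * J := by
    apply norm_int_bound T u _ _ hs hu.le huT (by positivity)
    intro r hr hrT
    rw [norm_smul]
    calc ‖K' r u‖ * ‖f u r - f u u‖ ≤ ‖K' r u‖ * (η * b * (r - u) ^ β) := by
          gcongr; exact h2 r hr hrT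
      _ = (η * b) * (‖K' r u‖ * (r - u) ^ β) := by ring
      _ ≤ (η * b) * (C * (r - u) ^ (β - α - 1)) :=
          mul_le_mul_of_nonneg_left (hK' r hr hrT) (by positivity)
      _ = _ := by ring
  have hB : ‖BK T K' f u u‖ ≤ (C * C * η * a * b * J) * J := by
    apply norm_int_bound T u _ _ hs hu.le huT (by positivity)
    intro r' hr' hrT'
    have hr0 : 0 < r' - u := by linarith
    have : ‖∫ r₁ in u..T, (K' r₁ u * K' r' u) • rectInc f u r₁ u r'‖ ≤
        (C * C * η * a * b * (r' - u) ^ (β - α - 1)) * J := by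
      apply norm_int_bound T u _ _ hs hu.le huT (by positivity)
      intro r hr hrT
      have hr1 : 0 < r - u := by linarith
      rw [norm_smul, norm_mul]
      calc ‖K' r u‖ * ‖K' r' u‖ * ‖rectInc f u r u r'‖
          ≤ ‖K' r u‖ * ‖K' r' u‖ * (η * a * b * (r - u) ^ β * (r' - u) ^ β) := by
            gcongr; exact h3 r hr hrT r' hr' hrT'
        _ = (η * a * b) * (‖K' r u‖ * (r - u) ^ β) * (‖K' r' u‖ * (r' - u) ^ β) := by ring
        _ ≤ (η * a * b) * (C * (r - u) ^ (β - α - 1)) * (C * (r' - u) ^ (β - α - 1)) := by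
            exact mul_le_mul (mul_le_mul_of_nonneg_left (hK' r hr hrT) (by positivity))
              (hK' r' hr' hrT') (by positivity) (by positivity)
        _ = _ := by ring
    refine this.trans (le_of_eq (by ring))
  unfold KstarT
  calc _ ≤ ‖(K T u * K T u) • f u u‖ + ‖K T u • AK T K' (fun x => f x u) u‖ +
        ‖K T u • AK T K' (fun y => f u y) u‖ + ‖BK T K' f u u‖ := by
        exact (norm_add_le _ _).trans (add_le_add_left ((norm_add_le _ _).trans
          (add_le_add_left (norm_add_le _ _) _)) _)
    _ ≤ (k * k) * η + k * ((C * η * a) * J) + k * ((C * η * b) * J) + (C * C * η * a * b * J) * J := by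
        rw [norm_smul, norm_smul, norm_smul, norm_mul]
        gcongr
    _ = _ := by ring

lemma Partition.mono {T : ℝ} (P : Partition T) {i j : ℕ} (h : i ≤ j) (hj : j ≤ P.n) :
    P.pts i ≤ P.pts j := by
  induction j, h using Nat.le_induction with
  | base => exact le_rfl
  | succ m hm ih => exact (ih (by omega)).trans (P.lt m (by omega)).le

lemma Partition.exists_cell {T : ℝ} (P : Partition T) (u : ℝ) (h0 : 0 ≤ u) (hT : u < T) :
    ∃ i < P.n, P.pts i ≤ u ∧ u < P.pts (i + 1) := by
  by_contra! h
  have : ∀ i ≤ P.n, P.pts i ≤ u := by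
    intro i
    induction i with
    | zero => intro _; rw [P.first]; exact h0
    | succ k ih => intro hk; exact h k (by omega) (ih (by omega))
  have := this P.n le_rfl
  rw [P.last] at this
  linarith

lemma Partition.cell_unique {T : ℝ} (P : Partition T) (u : ℝ) {i j : ℕ} (hi : i < P.n)
    (hj : j < P.n) (hui : u ∈ Ico (P.pts i) (P.pts (i + 1)))
    (huj : u ∈ Ico (P.pts j) (P.pts (j + 1))) : j = i := by
  rcases lt_trichotomy i j with h | h | h
  · have := P.mono (i := i + 1) (j := j) h hj.le
    have := hui.2; have := huj.1; linarith
  · exact h.symm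
  · have := P.mono (i := j + 1) (j := i) h hi.le
    have := huj.2; have := hui.1; linarith

lemma step2_eq {T : ℝ} (P Q : Partition T) (ψ : ℝ → ℝ → E) (u v : ℝ) {i j : ℕ} (hi : i < P.n)
    (hj : j < Q.n) (hu : u ∈ Ico (P.pts i) (P.pts (i + 1)))
    (hv : v ∈ Ico (Q.pts j) (Q.pts (j + 1))) :
    step2 P Q ψ u v = ψ (P.pts i) (Q.pts j) := by
  unfold step2
  rw [Finset.sum_eq_single i, Finset.sum_eq_single j]
  · rw [indicator_of_mem]; exact ⟨hu, hv⟩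
  · intro l hl hne
    rw [indicator_of_notMem]
    rintro ⟨-, h⟩
    exact hne (Q.cell_unique v hj (Finset.mem_range.1 hl) hv h)
  · intro h; exact absurd (Finset.mem_range.2 hj) h
  · intro l hl hne
    apply Finset.sum_eq_zero
    intro m _
    rw [indicator_of_notMem]
    rintro ⟨h, -⟩
    exact hne (P.cell_unique u hi (Finset.mem_range.1 hl) hu h)
  · intro h; exact absurd (Finset.mem_range.2 hi) h

/-- Left grid point and ratio function. -/
def IsProj {T : ℝ} (P : Partition T) (p : ℝ → ℝ) : Prop :=
  ∀ u, 0 ≤ u → u < T → ∃ i < P.n, p u = P.pts i ∧ P.pts i ≤ u ∧ u < P.pts (i + 1)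

/-- The dominating function. -/
def Gfun {T : ℝ} (P : Partition T) (b : ℝ) (u : ℝ) : ℝ :=
  ∑ i ∈ Finset.range P.n, (Ico (P.pts i) (P.pts (i + 1))).indicator
    (fun u => (P.pts (i + 1) - P.pts i) ^ b * (P.pts (i + 1) - u) ^ (-b)) u

lemma Gfun_nonneg {T : ℝ} (P : Partition T) (b : ℝ) (u : ℝ) : 0 ≤ Gfun P b u := by
  apply Finset.sum_nonneg
  intro i hi
  apply indicator_nonneg
  intro x hx
  have := hx.1; have := hx.2
  apply mul_nonneg <;> apply Real.rpow_nonneg <;> linarith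

lemma cell_int (c d b : ℝ) (h : c < d) (hb : b < 1) :
    IntegrableOn (fun u => (d - c) ^ b * (d - u) ^ (-b)) (Ico c d) ∧
    ∫ u in Ico c d, (d - c) ^ b * (d - u) ^ (-b) = (d - c) / (1 - b) := by
  have hint : IntervalIntegrable (fun u : ℝ => (d - u) ^ (-b)) volume c d := by
    have h := (intervalIntegral.intervalIntegrable_rpow' (a := d - c) (b := d - d)
      (r := -b) (by linarith)).comp_sub_left d
    simpa using h
  constructor
  · rw [integrableOn_Ico_iff_integrableOn_Ioo, ← integrableOn_Ioc_iff_integrableOn_Ioo]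
    rw [intervalIntegrable_iff_integrableOn_Ioc_of_le h.le] at hint
    exact hint.const_mul _
  · rw [integral_Ico_eq_integral_Ioc, ← intervalIntegral.integral_of_le h.le,
      intervalIntegral.integral_const_mul,
      intervalIntegral.integral_comp_sub_left (fun x => x ^ (-b)) d,
      integral_rpow (Or.inl (by linarith))]
    rw [sub_self, Real.zero_rpow (by linarith), sub_zero, ← mul_div_assoc,
      ← Real.rpow_add (by linarith)]
    have : b + (-b + 1) = 1 := by ring
    rw [this, Real.rpow_one]
    congr 1; ring

lemma Gfun_int {T : ℝ} (P : Partition T) (b : ℝ) (hb : b < 1) :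
    Integrable (Gfun P b) ∧ ∫ u, Gfun P b u = T / (1 - b) := by
  have hi : ∀ i ∈ Finset.range P.n, Integrable ((Ico (P.pts i) (P.pts (i + 1))).indicator
    (fun u => (P.pts (i + 1) - P.pts i) ^ b * (P.pts (i + 1) - u) ^ (-b))) := by
    intro i hi
    rw [integrable_indicator_iff measurableSet_Ico]
    exact (cell_int _ _ b (P.lt i (Finset.mem_range.1 hi)) hb).1
  constructor
  · exact integrable_finsetSum _ hi
  · unfold Gfun
    rw [integral_finsetSum _ hi]
    calc _ = ∑ i ∈ Finset.range P.n, (P.pts (i + 1) - P.pts i) / (1 - b) := by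
          apply Finset.sum_congr rfl
          intro i hi
          rw [integral_indicator measurableSet_Ico]
          exact (cell_int _ _ b (P.lt i (Finset.mem_range.1 hi)) hb).2
      _ = _ := by
          rw [← Finset.sum_div, Finset.sum_range_sub, P.last, P.first, sub_zero]

lemma exists_rho {T : ℝ} (P : Partition T) (p : ℝ → ℝ) (hp : IsProj P p) (b : ℝ) (u : ℝ)
    (h0 : 0 ≤ u) (hT : u < T) : ∃ ρ : ℝ, 1 ≤ ρ ∧ ρ ^ b ≤ Gfun P b u ∧
      ∀ r, u < r → r < T → |p r - p u| ≤ (r - u) * ρ := by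
  obtain ⟨i, hi, hpi, hiu, hui⟩ := hp u h0 hT
  refine ⟨(P.pts (i + 1) - P.pts i) / (P.pts (i + 1) - u), ?_, ?_, ?_⟩
  · rw [le_div_iff₀ (by linarith)]; linarith
  · rw [Real.div_rpow (by linarith) (by linarith), div_eq_mul_inv, ← Real.rpow_neg (by linarith)]
    unfold Gfun
    refine le_trans ?_ (Finset.single_le_sum (fun j hj => ?_) (Finset.mem_range.2 hi))
    · rw [indicator_of_mem (show u ∈ Ico (P.pts i) (P.pts (i + 1)) from ⟨hiu, hui⟩)]
    · apply indicator_nonneg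
      intro x hx
      have := hx.1; have := hx.2
      apply mul_nonneg <;> apply Real.rpow_nonneg <;> linarith
  · intro r hr hrT
    obtain ⟨j, hj, hpj, hjr, hrj⟩ := hp r (by linarith) hrT
    rw [hpj, hpi]
    have hpos : 0 ≤ (r - u) * ((P.pts (i + 1) - P.pts i) / (P.pts (i + 1) - u)) := by
      apply mul_nonneg (by linarith)
      apply div_nonneg <;> linarith
    rcases lt_or_ge r (P.pts (i + 1)) with h | h
    · have : j = i := P.cell_unique r hi hj ⟨by linarith, h⟩ ⟨hjr, hrj⟩
      subst this
      simpa using hpos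
    · have hle : P.pts i ≤ P.pts j := by
        apply P.mono _ hj.le
        by_contra! hlt
        have := P.mono (i := j + 1) (j := i) hlt hi.le
        linarith
      rw [abs_of_nonneg (by linarith), ← mul_div_assoc, le_div_iff₀ (by linarith)]
      nlinarith [mul_nonneg (sub_nonneg.2 h) (sub_nonneg.2 hiu),
        mul_nonneg (sub_nonneg.2 hjr) (sub_nonneg.2 hui.le)]

lemma interp (x A δ lam β : ℝ) (hA : 0 ≤ A) (hx : 0 ≤ x) (hδ : 0 < δ) (hβ : 0 < β) (h : β < lam)
    (y : ℝ) (h1 : y ≤ A * δ ^ lam) (h2 : y ≤ A * x ^ lam) : y ≤ A * δ ^ (lam - β) * x ^ β := by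
  have e : ∀ z : ℝ, 0 ≤ z → z ^ lam = z ^ (lam - β) * z ^ β := by
    intro z hz
    rw [← Real.rpow_add_of_nonneg hz (by linarith) hβ.le]; congr 1; ring
  rcases le_total x δ with hxd | hxd
  · refine h2.trans ?_
    rw [e x hx, ← mul_assoc]
    have : x ^ (lam - β) ≤ δ ^ (lam - β) := Real.rpow_le_rpow hx hxd (by linarith)
    gcongr
  · refine h1.trans ?_
    rw [e δ hδ.le, ← mul_assoc]
    gcongr

lemma Partition.exists_proj {T : ℝ} (P : Partition T) : ∃ p, IsProj P p := by
  have : ∀ u, ∃ x : ℝ, 0 ≤ u → u < T → ∃ i < P.n, x = P.pts i ∧ P.pts i ≤ u ∧ u < P.pts (i + 1) := by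
    intro u
    by_cases h : 0 ≤ u ∧ u < T
    · obtain ⟨i, hi, h1, h2⟩ := P.exists_cell u h.1 h.2
      exact ⟨P.pts i, fun _ _ => ⟨i, hi, rfl, h1, h2⟩⟩
    · exact ⟨0, fun a b => absurd ⟨a, b⟩ h⟩
  choose p hp using this
  exact ⟨p, hp⟩

lemma proj_near {T : ℝ} (P : Partition T) (p : ℝ → ℝ) (hp : IsProj P p) (δ : ℝ)
    (hδ : P.mesh < δ) (u : ℝ) (h0 : 0 ≤ u) (hT : u < T) :
    p u ∈ Icc (0:ℝ) T ∧ |p u - u| ≤ δ := by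
  obtain ⟨i, hi, hpi, hiu, hui⟩ := hp u h0 hT
  have hm : P.pts (i + 1) - P.pts i ≤ P.mesh :=
    Finset.le_sup' (fun i => P.pts (i + 1) - P.pts i) (Finset.mem_range.2 hi)
  have := P.mono (Nat.zero_le i) hi.le
  rw [P.first] at this
  refine ⟨⟨by linarith, by linarith⟩, ?_⟩
  rw [abs_le]; constructor <;> linarith

lemma step2_proj {T : ℝ} (P Q : Partition T) (ψ : ℝ → ℝ → E) (p q : ℝ → ℝ) (hp : IsProj P p)
    (hq : IsProj Q q) (u v : ℝ) (hu : 0 ≤ u) (huT : u < T) (hv : 0 ≤ v) (hvT : v < T) :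
    step2 P Q ψ u v = ψ (p u) (q v) := by
  obtain ⟨i, hi, hpi, hiu, hui⟩ := hp u hu huT
  obtain ⟨j, hj, hpj, hju, huj⟩ := hq v hv hvT
  rw [hpi, hpj]
  exact step2_eq P Q ψ u v hi hj ⟨hiu, hui⟩ ⟨hju, huj⟩

set_option maxHeartbeats 2000000 in
lemma pointwise (T α β lam C H δ : ℝ) (K K' : ℝ → ℝ → ℝ) (hC : 0 ≤ C) (hA : CondA T α C K K')
    (hα : 0 ≤ α) (hβ : α < β) (hβl : β < lam) (hH : 0 ≤ H) (hδ : 0 < δ) (hδ1 : δ ≤ 1)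
    (ψ : ℝ → ℝ → E) (hψ : IsStrongHolderBiWith T lam H ψ) (P Q : Partition T)
    (hP : P.mesh < δ) (hQ : Q.mesh < δ) (u : ℝ) (hu : 0 < u) (huT : u < T) :
    ‖KstarT T K K' (fun x y => step2 P Q ψ x y - ψ x y) u u‖ ≤
      8 * H * δ ^ (lam - β) * (C ^ 2 * (1 + T ^ (β - α) / (β - α)) ^ 2 * 2 *
        (u ^ (-(4 * α)) + (T - u) ^ (-(4 * α)) + Gfun P (2 * β) u + Gfun Q (2 * β) u)) := by
  obtain ⟨p, hp⟩ := P.exists_proj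
  obtain ⟨q, hq⟩ := Q.exists_proj
  obtain ⟨ρ, hρ1, hρG, hρ⟩ := exists_rho P p hp (2 * β) u hu.le huT
  obtain ⟨σ, hσ1, hσG, hσ⟩ := exists_rho Q q hq (2 * β) u hu.le huT
  obtain ⟨⟨hψ1, hψ2⟩, hψ3⟩ := hψ
  have hβ0 : 0 < β := by linarith
  have hl0 : 0 < lam := by linarith
  have hs : 0 < β - α := by linarith
  have hT : 0 < T := hu.trans huT
  have hTu : 0 < T - u := by linarith
  set f : ℝ → ℝ → E := fun x y => step2 P Q ψ x y - ψ x y with hf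
  have fe : ∀ x y, 0 ≤ x → x < T → 0 ≤ y → y < T → f x y = ψ (p x) (q y) - ψ x y := by
    intro x y hx hxT hy hyT
    simp only [hf]
    rw [step2_proj P Q ψ p q hp hq x y hx hxT hy hyT]
  have np := proj_near P p hp δ hP
  have nq := proj_near Q q hq δ hQ
  have hsup : ∀ x y, 0 ≤ x → x < T → 0 ≤ y → y < T → ‖f x y‖ ≤ 2 * H * δ ^ lam := by
    intro x y hx hxT hy hyT
    rw [fe x y hx hxT hy hyT]
    have e : ψ (p x) (q y) - ψ x y = (ψ (p x) (q y) - ψ x (q y)) + (ψ x (q y) - ψ x y) := by abel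
    rw [e]
    have a1 := hψ1 x ⟨hx, hxT.le⟩ (p x) (np x hx hxT).1 (q y) (nq y hy hyT).1
    have a2 := hψ2 x ⟨hx, hxT.le⟩ y ⟨hy, hyT.le⟩ (q y) (nq y hy hyT).1
    have b1 : |p x - x| ^ lam ≤ δ ^ lam :=
      Real.rpow_le_rpow (abs_nonneg _) (np x hx hxT).2 hl0.le
    have b2 : |q y - y| ^ lam ≤ δ ^ lam :=
      Real.rpow_le_rpow (abs_nonneg _) (nq y hy hyT).2 hl0.le
    have c1 := mul_le_mul_of_nonneg_left b1 hH
    have c2 := mul_le_mul_of_nonneg_left b2 hH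
    have := norm_add_le (ψ (p x) (q y) - ψ x (q y)) (ψ x (q y) - ψ x y)
    linarith
  have hd : 0 ≤ H * δ ^ lam := by positivity
  have hincρ : ∀ r, u < r → r < T → |p r - p u| ^ lam ≤ ((r - u) * ρ) ^ lam := fun r hr hrT =>
    Real.rpow_le_rpow (abs_nonneg _) (hρ r hr hrT) hl0.le
  have hincσ : ∀ r, u < r → r < T → |q r - q u| ^ lam ≤ ((r - u) * σ) ^ lam := fun r hr hrT =>
    Real.rpow_le_rpow (abs_nonneg _) (hσ r hr hrT) hl0.le
  have hinc1 : ∀ r, u < r → ∀ τ : ℝ, 1 ≤ τ → |r - u| ^ lam ≤ ((r - u) * τ) ^ lam := by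
    intro r hr τ hτ
    apply Real.rpow_le_rpow (abs_nonneg _) _ hl0.le
    rw [abs_of_pos (by linarith)]
    nlinarith
  have hkb := kstarT_bound T α β C K K' hC hA hβ f u (8 * H * δ ^ (lam - β)) (ρ ^ β) (σ ^ β)
    hu huT (by positivity) (by positivity) (by positivity) ?_ ?_ ?_ ?_
  · refine hkb.trans ?_
    set J := T ^ (β - α) / (β - α) with hJ
    have hJ0 : 0 ≤ J := by positivity
    set k := u ^ (-α) * (T - u) ^ (-α) with hk
    have hk0 : 0 ≤ k := by positivity
    have ea : (ρ ^ β) ^ 2 ≤ Gfun P (2 * β) u := by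
      rw [← Real.rpow_natCast, ← Real.rpow_mul (by linarith)]
      convert hρG using 2; push_cast; ring
    have eb : (σ ^ β) ^ 2 ≤ Gfun Q (2 * β) u := by
      rw [← Real.rpow_natCast, ← Real.rpow_mul (by linarith)]
      convert hσG using 2; push_cast; ring
    have ek : 2 * k ^ 2 ≤ u ^ (-(4 * α)) + (T - u) ^ (-(4 * α)) := by
      have e1 : ∀ x : ℝ, 0 < x → x ^ (-(4 * α)) = (x ^ (-α)) ^ 4 := by
        intro x hx
        rw [← Real.rpow_natCast, ← Real.rpow_mul hx.le]; congr 1; push_cast; ring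
      rw [e1 u hu, e1 _ hTu, hk]
      nlinarith [sq_nonneg ((u ^ (-α)) ^ 2 - ((T - u) ^ (-α)) ^ 2)]
    have ha0 : 0 ≤ ρ ^ β := by positivity
    have hb0 : 0 ≤ σ ^ β := by positivity
    have m1 : C * k + C * J * ρ ^ β ≤ C * (1 + J) * (k + ρ ^ β) := by
      have : 0 ≤ C * J * k + C * ρ ^ β := by positivity
      nlinarith
    have m2 : C * k + C * J * σ ^ β ≤ C * (1 + J) * (k + σ ^ β) := by
      have : 0 ≤ C * J * k + C * σ ^ β := by positivity
      nlinarith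
    have m3 : (k + ρ ^ β) * (k + σ ^ β) ≤ 2 * (u ^ (-(4 * α)) + (T - u) ^ (-(4 * α))
        + Gfun P (2 * β) u + Gfun Q (2 * β) u) := by
      nlinarith [sq_nonneg (k - ρ ^ β), sq_nonneg (k - σ ^ β), sq_nonneg (ρ ^ β - σ ^ β),
        sq_nonneg k]
    have hη : 0 ≤ 8 * H * δ ^ (lam - β) := by positivity
    rw [mul_assoc]
    apply mul_le_mul_of_nonneg_left _ hη
    calc _ ≤ (C * (1 + J) * (k + ρ ^ β)) * (C * (1 + J) * (k + σ ^ β)) :=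
          mul_le_mul m1 m2 (by positivity) (by positivity)
      _ = C ^ 2 * (1 + J) ^ 2 * ((k + ρ ^ β) * (k + σ ^ β)) := by ring
      _ ≤ C ^ 2 * (1 + J) ^ 2 * (2 * (u ^ (-(4 * α)) + (T - u) ^ (-(4 * α))
        + Gfun P (2 * β) u + Gfun Q (2 * β) u)) :=
          mul_le_mul_of_nonneg_left m3 (by positivity)
      _ = _ := by ring
  · refine (hsup u u hu.le huT hu.le huT).trans ?_
    have : δ ^ lam ≤ δ ^ (lam - β) :=
      Real.rpow_le_rpow_of_exponent_ge hδ hδ1 (by linarith)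
    have := mul_le_mul_of_nonneg_left this hH
    nlinarith
  · intro r hr hrT
    have hr0 : 0 ≤ r := by linarith
    have key := interp ((r - u) * ρ) (8 * H) δ lam β (by positivity)
      (mul_nonneg (by linarith) (by linarith)) hδ hβ0 hβl ‖f r u - f u u‖ ?_ ?_
    · rw [Real.mul_rpow (by linarith) (by linarith)] at key
      exact key.trans (le_of_eq (by ring))
    · have := norm_sub_le (f r u) (f u u)
      have := hsup r u hr0 hrT hu.le huT
      have := hsup u u hu.le huT hu.le huT
      linarith
    · rw [fe r u hr0 hrT hu.le huT, fe u u hu.le huT hu.le huT]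
      have e : ψ (p r) (q u) - ψ r u - (ψ (p u) (q u) - ψ u u) =
        (ψ (p r) (q u) - ψ (p u) (q u)) - (ψ r u - ψ u u) := by abel
      rw [e]
      have a1 := hψ1 (p u) (np u hu.le huT).1 (p r) (np r hr0 hrT).1 (q u) (nq u hu.le huT).1
      have a2 := hψ1 u ⟨hu.le, huT.le⟩ r ⟨hr0, hrT.le⟩ u ⟨hu.le, huT.le⟩
      have c1 := mul_le_mul_of_nonneg_left (hincρ r hr hrT) hH
      have c2 := mul_le_mul_of_nonneg_left (hinc1 r hr ρ hρ1) hH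
      have := norm_sub_le (ψ (p r) (q u) - ψ (p u) (q u)) (ψ r u - ψ u u)
      have h0 : 0 ≤ H * ((r - u) * ρ) ^ lam :=
        mul_nonneg hH (Real.rpow_nonneg (mul_nonneg (by linarith) (by linarith)) _)
      linarith
  · intro r hr hrT
    have hr0 : 0 ≤ r := by linarith
    have key := interp ((r - u) * σ) (8 * H) δ lam β (by positivity)
      (mul_nonneg (by linarith) (by linarith)) hδ hβ0 hβl ‖f u r - f u u‖ ?_ ?_
    · rw [Real.mul_rpow (by linarith) (by linarith)] at key
      exact key.trans (le_of_eq (by ring))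
    · have := norm_sub_le (f u r) (f u u)
      have := hsup u r hu.le huT hr0 hrT
      have := hsup u u hu.le huT hu.le huT
      linarith
    · rw [fe u r hu.le huT hr0 hrT, fe u u hu.le huT hu.le huT]
      have e : ψ (p u) (q r) - ψ u r - (ψ (p u) (q u) - ψ u u) =
        (ψ (p u) (q r) - ψ (p u) (q u)) - (ψ u r - ψ u u) := by abel
      rw [e]
      have a1 := hψ2 (p u) (np u hu.le huT).1 (q u) (nq u hu.le huT).1 (q r) (nq r hr0 hrT).1
      have a2 := hψ2 u ⟨hu.le, huT.le⟩ u ⟨hu.le, huT.le⟩ r ⟨hr0, hrT.le⟩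
      have c1 := mul_le_mul_of_nonneg_left (hincσ r hr hrT) hH
      have c2 := mul_le_mul_of_nonneg_left (hinc1 r hr σ hσ1) hH
      have := norm_sub_le (ψ (p u) (q r) - ψ (p u) (q u)) (ψ u r - ψ u u)
      have h0 : 0 ≤ H * ((r - u) * σ) ^ lam :=
        mul_nonneg hH (Real.rpow_nonneg (mul_nonneg (by linarith) (by linarith)) _)
      linarith
  · intro r hr hrT r' hr' hrT'
    have hr0 : 0 ≤ r := by linarith
    have hr0' : 0 ≤ r' := by linarith
    have hx : 0 ≤ (r - u) * ρ := mul_nonneg (by linarith) (by linarith)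
    have hy : 0 ≤ (r' - u) * σ := mul_nonneg (by linarith) (by linarith)
    have key := interp (((r - u) * ρ) * ((r' - u) * σ)) (8 * H) δ lam β (by positivity)
      (mul_nonneg hx hy) hδ hβ0 hβl ‖rectInc f u r u r'‖ ?_ ?_
    · rw [Real.mul_rpow hx hy, Real.mul_rpow (by linarith) (by linarith),
        Real.mul_rpow (by linarith) (by linarith)] at key
      exact key.trans (le_of_eq (by ring))
    · unfold rectInc
      have := hsup u u hu.le huT hu.le huT
      have := hsup r r' hr0 hrT hr0' hrT'
      have := hsup u r' hu.le huT hr0' hrT'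
      have := hsup r u hr0 hrT hu.le huT
      have := norm_sub_le (f u u + f r r' - f u r') (f r u)
      have := norm_sub_le (f u u + f r r') (f u r')
      have := norm_add_le (f u u) (f r r')
      linarith
    · have e : rectInc f u r u r' = rectInc ψ (p u) (p r) (q u) (q r') - rectInc ψ u r u r' := by
        unfold rectInc
        rw [fe u u hu.le huT hu.le huT, fe r r' hr0 hrT hr0' hrT', fe u r' hu.le huT hr0' hrT',
          fe r u hr0 hrT hu.le huT]
        abel
      rw [e, Real.mul_rpow hx hy]
      have a1 := hψ3 (p u) (np u hu.le huT).1 (p r) (np r hr0 hrT).1 (q u) (nq u hu.le huT).1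
        (q r') (nq r' hr0' hrT').1
      have a2 := hψ3 u ⟨hu.le, huT.le⟩ r ⟨hr0, hrT.le⟩ u ⟨hu.le, huT.le⟩ r' ⟨hr0', hrT'.le⟩
      have hX : 0 ≤ ((r - u) * ρ) ^ lam := Real.rpow_nonneg hx _
      have hY : 0 ≤ ((r' - u) * σ) ^ lam := Real.rpow_nonneg hy _
      have c1 : H * |p r - p u| ^ lam * |q r' - q u| ^ lam ≤
          H * ((r - u) * ρ) ^ lam * ((r' - u) * σ) ^ lam :=
        mul_le_mul (mul_le_mul_of_nonneg_left (hincρ r hr hrT) hH) (hincσ r' hr' hrT')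
          (Real.rpow_nonneg (abs_nonneg _) _) (mul_nonneg hH hX)
      have c2 : H * |r - u| ^ lam * |r' - u| ^ lam ≤
          H * ((r - u) * ρ) ^ lam * ((r' - u) * σ) ^ lam :=
        mul_le_mul (mul_le_mul_of_nonneg_left (hinc1 r hr ρ hρ1) hH) (hinc1 r' hr' σ hσ1)
          (Real.rpow_nonneg (abs_nonneg _) _) (mul_nonneg hH hX)
      have := norm_sub_le (rectInc ψ (p u) (p r) (q u) (q r')) (rectInc ψ u r u r')
      have : 0 ≤ H * ((r - u) * ρ) ^ lam * ((r' - u) * σ) ^ lam :=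
        mul_nonneg (mul_nonneg hH hX) hY
      linarith

lemma CondA.abs {T α C : ℝ} {K K' : ℝ → ℝ → ℝ} (h : CondA T α C K K') :
    CondA T α |C| K K' := by
  refine ⟨fun s t hs hst htT => (h.1 s t hs hst htT).trans ?_, fun s t hs hst htT =>
    ⟨(h.2 s t hs hst htT).1, (h.2 s t hs hst htT).2.trans ?_⟩⟩
  · have : 0 < t - s := by linarith
    gcongr
    exact le_abs_self C
  · have : 0 < t - s := by linarith
    gcongr
    exact le_abs_self C

lemma IsStrongHolderBiWith.abs {T lam C : ℝ} {ψ : ℝ → ℝ → E}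
    (h : IsStrongHolderBiWith T lam C ψ) : IsStrongHolderBiWith T lam |C| ψ := by
  obtain ⟨⟨h1, h2⟩, h3⟩ := h
  refine ⟨⟨fun a ha b hb c hc => (h1 a ha b hb c hc).trans ?_,
    fun a ha b hb c hc => (h2 a ha b hb c hc).trans ?_⟩,
    fun a ha b hb c hc d hd => (h3 a ha b hb c hc d hd).trans ?_⟩ <;>
  · gcongr
    exact le_abs_self C

lemma Gfun_ii {T : ℝ} (hT : 0 < T) (P : Partition T) (b : ℝ) (hb : b < 1) :
    IntervalIntegrable (Gfun P b) volume 0 T ∧ ∫ u in (0:ℝ)..T, Gfun P b u ≤ T / (1 - b) := by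
  obtain ⟨h1, h2⟩ := Gfun_int P b hb
  refine ⟨h1.intervalIntegrable, ?_⟩
  rw [← h2, intervalIntegral.integral_of_le hT.le]
  exact setIntegral_le_integral h1 (Filter.Eventually.of_forall (Gfun_nonneg P b))

/-- Theorem 4.1(ii): convergence of the diagonal restriction of
`(𝒦*⊗𝒦*)(ψ^π − ψ)` to `0` in `L¹([0,T]; E)` as the mesh tends to `0`. -/
theorem kstarT_step2_diag_tendsto_L1 {E : Type*} [NormedAddCommGroup E] [NormedSpace ℝ E]
    [CompleteSpace E] (T α lam : ℝ) (hT : 0 < T) (hα : 0 ≤ α) (hα' : α < 1 / 4)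
    (K K' : ℝ → ℝ → ℝ) (hK : IsVolterraKernel K) (hA : ∃ C : ℝ, CondA T α C K K')
    (ψ : ℝ → ℝ → E) (hlam : 0 < lam) (hlam' : lam ≤ 1)
    (hψ : IsStrongHolderBi T lam ψ) (hαlam : α < lam) :
    ∀ ε > 0, ∃ δ > 0, ∀ P Q : Partition T, max P.mesh Q.mesh < δ →
      (∫ r in (0:ℝ)..T,
          ‖KstarT T K K' (fun x y => step2 P Q ψ x y - ψ x y) r r‖) < ε := by
  obtain ⟨C₀, hA₀⟩ := hA
  obtain ⟨H₀, hψ₀⟩ := hψ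
  have hA := hA₀.abs
  have hψ := hψ₀.abs
  set C := |C₀|
  set H := |H₀|
  have hC : 0 ≤ C := abs_nonneg _
  have hH : 0 ≤ H := abs_nonneg _
  obtain ⟨β, hβ, hβ'⟩ := exists_between (lt_min hαlam hα')
  have hβl : β < lam := hβ'.trans_le (min_le_left _ _)
  have hβ4 : β < 1 / 4 := hβ'.trans_le (min_le_right _ _)
  have i1 : IntervalIntegrable (fun u : ℝ => u ^ (-(4 * α))) volume 0 T :=
    intervalIntegral.intervalIntegrable_rpow' (by linarith)
  have i2 : IntervalIntegrable (fun u : ℝ => (T - u) ^ (-(4 * α))) volume 0 T := by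
    have h := (intervalIntegral.intervalIntegrable_rpow' (a := T - 0) (b := T - T)
      (r := -(4 * α)) (by linarith)).comp_sub_left T
    simpa using h
  set M := ∫ u in (0:ℝ)..T, (u ^ (-(4 * α)) + (T - u) ^ (-(4 * α))) with hM
  have hM0 : 0 ≤ M := by
    apply intervalIntegral.integral_nonneg hT.le
    intro u hu
    exact add_nonneg (Real.rpow_nonneg hu.1 _) (Real.rpow_nonneg (by linarith [hu.2]) _)
  have hs : 0 < β - α := by linarith
  have h2β : 0 < 1 - 2 * β := by linarith
  set N := C ^ 2 * (1 + T ^ (β - α) / (β - α)) ^ 2 * 2 with hN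
  have hN0 : 0 ≤ N := by positivity
  set W := 8 * H * (N * (M + T / (1 - 2 * β) + T / (1 - 2 * β))) with hW
  have hW0 : 0 ≤ W := by positivity
  intro ε hε
  have hls : 0 < lam - β := by linarith
  set x := ε / (W + 1) with hx
  have hx0 : 0 < x := by positivity
  set δ := min 1 (x ^ (lam - β)⁻¹) with hδ
  have hδ0 : 0 < δ := lt_min one_pos (Real.rpow_pos_of_pos hx0 _)
  have hδs : δ ^ (lam - β) ≤ x := by
    calc δ ^ (lam - β) ≤ (x ^ (lam - β)⁻¹) ^ (lam - β) :=
          Real.rpow_le_rpow hδ0.le (min_le_right _ _) hls.le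
      _ = x := Real.rpow_inv_rpow hx0.le hls.ne'
  refine ⟨δ, hδ0, ?_⟩
  intro P Q hPQ
  have hP : P.mesh < δ := (le_max_left _ _).trans_lt hPQ
  have hQ : Q.mesh < δ := (le_max_right _ _).trans_lt hPQ
  have gP := Gfun_ii hT P (2 * β) (by linarith)
  have gQ := Gfun_ii hT Q (2 * β) (by linarith)
  have i12 := i1.add i2
  have i12P := i12.add gP.1
  have i12PQ := i12P.add gQ.1
  have hI : ∫ u in (0:ℝ)..T, (u ^ (-(4 * α)) + (T - u) ^ (-(4 * α)) + Gfun P (2 * β) u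
      + Gfun Q (2 * β) u) ≤ M + T / (1 - 2 * β) + T / (1 - 2 * β) := by
    rw [intervalIntegral.integral_add i12P gQ.1, intervalIntegral.integral_add i12 gP.1]
    exact add_le_add (add_le_add le_rfl gP.2) gQ.2
  have hη : 0 ≤ 8 * H * δ ^ (lam - β) := by positivity
  have hmain : (∫ r in (0:ℝ)..T, ‖KstarT T K K' (fun x y => step2 P Q ψ x y - ψ x y) r r‖) ≤
      ∫ u in (0:ℝ)..T, 8 * H * δ ^ (lam - β) * (N *
        (u ^ (-(4 * α)) + (T - u) ^ (-(4 * α)) + Gfun P (2 * β) u + Gfun Q (2 * β) u)) := by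
    rw [intervalIntegral.integral_of_le hT.le, intervalIntegral.integral_of_le hT.le]
    apply integral_mono_of_nonneg
    · exact Filter.Eventually.of_forall (fun _ => norm_nonneg _)
    · have := (i12PQ.const_mul N).const_mul (8 * H * δ ^ (lam - β))
      exact (intervalIntegrable_iff_integrableOn_Ioc_of_le hT.le).1 this
    · rw [Filter.EventuallyLE, ae_restrict_iff' measurableSet_Ioc]
      filter_upwards [ae_ne_real T] with u hu hu2
      exact pointwise T α β lam C H δ K K' hC hA hα hβ hβl hH hδ0 (min_le_left _ _) ψ hψ P Q
        hP hQ u hu2.1 (lt_of_le_of_ne hu2.2 hu)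
  refine hmain.trans_lt ?_
  rw [intervalIntegral.integral_const_mul, intervalIntegral.integral_const_mul]
  calc _ ≤ 8 * H * δ ^ (lam - β) * (N * (M + T / (1 - 2 * β) + T / (1 - 2 * β))) :=
        mul_le_mul_of_nonneg_left (mul_le_mul_of_nonneg_left hI hN0) hη
    _ = W * δ ^ (lam - β) := by rw [hW]; ring
    _ ≤ W * x := mul_le_mul_of_nonneg_left hδs hW0
    _ < (W + 1) * x := by linarith
    _ = ε := by rw [hx]; field_simp

end YS
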